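/- Let u₀ ∈ L¹(ℝⁿ; (1+|x|)dx) with M := ∫ u₀ and m_i := ∫ x_i u₀(x) dx. Then for any p ∈ [1,∞], t^{(n/2)(1−1/p)+1/2} ‖G(t)∗u₀ − M G(·,t) + m·∇G(·,t)‖_{L^p} → 0 as t → ∞. -/

import Mathlib

open Real MeasureTheory Filter ENNReal

/-- The `n`-dimensional heat kernel. -/
noncomputable def heatG (n : ℕ) (x : EuclideanSpace ℝ (Fin n)) (t : ℝ) : ℝ :=
  (4 * Real.pi * t) ^ (-(n : ℝ) / 2) * Real.exp (-‖x‖ ^ 2 / (4 * t))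

lemma exp_rem (s : ℝ) : |Real.exp s - 1 - s| ≤ s ^ 2 * Real.exp |s| := by
  have h := Complex.norm_exp_sub_sum_le_norm_mul_exp (s : ℂ) 2
  simp only [Finset.sum_range_succ, Finset.sum_range_zero] at h
  have e : Complex.exp (s:ℂ) - (0 + (s:ℂ)^0 / (Nat.factorial 0 : ℕ) + (s:ℂ)^1 / (Nat.factorial 1 : ℕ)) = ((Real.exp s - 1 - s : ℝ) : ℂ) := by
    push_cast; simp; ring
  rw [e, Complex.norm_real, Complex.norm_real, Real.norm_eq_abs, Real.norm_eq_abs, sq_abs] at h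
  exact h

lemma kernel_bound {E : Type*} [NormedAddCommGroup E] [InnerProductSpace ℝ E] (z w : E) :
    |Real.exp (-‖z - w‖ ^ 2 / 4) - Real.exp (-‖z‖ ^ 2 / 4)
        - Real.exp (-‖z‖ ^ 2 / 4) * (inner ℝ z w / 2)|
      ≤ (3 * Real.exp 3) * min ‖w‖ (‖w‖ ^ 2) *
        (Real.exp (-‖z - w‖ ^ 2 / 8) + Real.exp (-‖z‖ ^ 2 / 8)) := by
  have hin : |inner ℝ z w| ≤ ‖z‖ * ‖w‖ := abs_real_inner_le_norm z w
  have hz := norm_nonneg z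
  have hw := norm_nonneg w
  have hk1 := Real.exp_pos (-‖z - w‖ ^ 2 / 8)
  have hk2 := Real.exp_pos (-‖z‖ ^ 2 / 8)
  have he3 : 1 ≤ Real.exp 3 := Real.one_le_exp (by norm_num)
  rcases le_total ‖w‖ 1 with h1 | h1
  · have hmin : min ‖w‖ (‖w‖ ^ 2) = ‖w‖ ^ 2 := min_eq_right (by nlinarith)
    rw [hmin]
    set s : ℝ := inner ℝ z w / 2 - ‖w‖ ^ 2 / 4 with hs
    set a : ℝ := ‖z‖ / 2 + 1 / 4 with ha
    have hexp : Real.exp (-‖z - w‖ ^ 2 / 4) = Real.exp (-‖z‖ ^ 2 / 4) * Real.exp s := by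
      rw [← Real.exp_add, norm_sub_sq_real]; congr 1; rw [hs]; ring
    have hsw : |s| ≤ ‖w‖ * a := by
      have := abs_le.mp hin
      rw [abs_le, hs, ha]; constructor <;> nlinarith
    have ha0 : 0 ≤ a := by positivity
    have hsa : |s| ≤ a := hsw.trans (by nlinarith)
    have hs2 : s ^ 2 ≤ ‖w‖ ^ 2 * a ^ 2 := by
      rw [← sq_abs, ← mul_pow]; exact pow_le_pow_left₀ (abs_nonneg _) hsw 2
    have ha2 : a ^ 2 ≤ 2 * Real.exp a := by
      have := Real.quadratic_le_exp_of_nonneg ha0; nlinarith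
    have hr := exp_rem s
    have hea : Real.exp |s| ≤ Real.exp a := Real.exp_le_exp.mpr hsa
    have h2a : 1 ≤ Real.exp (2 * a) := Real.one_le_exp (by positivity)
    have haa : Real.exp (2*a) = Real.exp a * Real.exp a := by rw [← Real.exp_add]; ring_nf
    have hb : |Real.exp s - 1 - inner ℝ z w / 2| ≤ ‖w‖ ^ 2 * (3 * Real.exp (2 * a)) := by
      have e1 : Real.exp s - 1 - inner ℝ z w / 2 = (Real.exp s - 1 - s) - ‖w‖ ^ 2 / 4 := by
        rw [hs]; ring
      rw [e1]
      have e2 : |(Real.exp s - 1 - s) - ‖w‖ ^ 2 / 4| ≤ |Real.exp s - 1 - s| + ‖w‖ ^ 2 / 4 := by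
        refine (abs_sub _ _).trans ?_
        rw [abs_of_nonneg (by positivity : 0 ≤ ‖w‖ ^ 2 / 4)]
      have e3 : s ^ 2 * Real.exp |s| ≤ (‖w‖ ^ 2 * a ^ 2) * Real.exp a := by gcongr
      have e4 : (‖w‖ ^ 2 * a ^ 2) * Real.exp a ≤ (‖w‖ ^ 2 * (2 * Real.exp a)) * Real.exp a := by
        gcongr
      have e5 : ‖w‖ ^ 2 / 4 ≤ ‖w‖ ^ 2 * Real.exp (2 * a) := by nlinarith [sq_nonneg ‖w‖]
      rw [haa] at *
      linarith
    have hfin : Real.exp (-‖z‖ ^ 2 / 4) * Real.exp (2 * a) ≤ Real.exp 3 * Real.exp (-‖z‖ ^ 2 / 8) := by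
      rw [← Real.exp_add, ← Real.exp_add]
      apply Real.exp_le_exp.mpr
      rw [ha]; nlinarith [sq_nonneg (‖z‖ - 4)]
    have e6 : Real.exp (-‖z - w‖ ^ 2 / 4) - Real.exp (-‖z‖ ^ 2 / 4)
        - Real.exp (-‖z‖ ^ 2 / 4) * (inner ℝ z w / 2)
        = Real.exp (-‖z‖ ^ 2 / 4) * (Real.exp s - 1 - inner ℝ z w / 2) := by rw [hexp]; ring
    rw [e6, abs_mul, abs_of_pos (Real.exp_pos _)]
    calc _ ≤ Real.exp (-‖z‖ ^ 2 / 4) * (‖w‖ ^ 2 * (3 * Real.exp (2 * a))) := by gcongr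
      _ = 3 * ‖w‖ ^ 2 * (Real.exp (-‖z‖ ^ 2 / 4) * Real.exp (2 * a)) := by ring
      _ ≤ 3 * ‖w‖ ^ 2 * (Real.exp 3 * Real.exp (-‖z‖ ^ 2 / 8)) := by gcongr
      _ = 3 * Real.exp 3 * ‖w‖ ^ 2 * (0 + Real.exp (-‖z‖ ^ 2 / 8)) := by ring
      _ ≤ _ := by gcongr
  · have hmin : min ‖w‖ (‖w‖ ^ 2) = ‖w‖ := min_eq_left (by nlinarith)
    rw [hmin]
    have g1 : Real.exp (-‖z - w‖ ^ 2 / 4) ≤ Real.exp (-‖z - w‖ ^ 2 / 8) :=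
      Real.exp_le_exp.mpr (by nlinarith [sq_nonneg ‖z - w‖])
    have g2 : Real.exp (-‖z‖ ^ 2 / 4) ≤ Real.exp (-‖z‖ ^ 2 / 8) :=
      Real.exp_le_exp.mpr (by nlinarith [sq_nonneg ‖z‖])
    have g3 : Real.exp (-‖z‖ ^ 2 / 4) * (‖z‖ / 2) ≤ Real.exp (-‖z‖ ^ 2 / 8) := by
      have q : ‖z‖ / 2 ≤ Real.exp (‖z‖ ^ 2 / 8) := by
        have := Real.add_one_le_exp (‖z‖ ^ 2 / 8); nlinarith [sq_nonneg (‖z‖ - 2)]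
      calc _ ≤ Real.exp (-‖z‖ ^ 2 / 4) * Real.exp (‖z‖ ^ 2 / 8) := by gcongr
        _ = _ := by rw [← Real.exp_add]; ring_nf
    have g4 : |Real.exp (-‖z‖ ^ 2 / 4) * (inner ℝ z w / 2)| ≤ Real.exp (-‖z‖ ^ 2 / 8) * ‖w‖ := by
      rw [abs_mul, abs_of_pos (Real.exp_pos _), abs_div, abs_two]
      calc _ ≤ Real.exp (-‖z‖ ^ 2 / 4) * ((‖z‖ * ‖w‖) / 2) := by gcongr
        _ = (Real.exp (-‖z‖ ^ 2 / 4) * (‖z‖ / 2)) * ‖w‖ := by ring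
        _ ≤ _ := by gcongr
    have p1 := Real.exp_pos (-‖z - w‖ ^ 2 / 4)
    have p2 := Real.exp_pos (-‖z‖ ^ 2 / 4)
    have step : |Real.exp (-‖z - w‖ ^ 2 / 4) - Real.exp (-‖z‖ ^ 2 / 4)
        - Real.exp (-‖z‖ ^ 2 / 4) * (inner ℝ z w / 2)|
        ≤ 2 * ‖w‖ * (Real.exp (-‖z - w‖ ^ 2 / 8) + Real.exp (-‖z‖ ^ 2 / 8)) := by
      have := abs_le.mp g4
      rw [abs_le]; constructor <;> nlinarith
    refine step.trans ?_
    gcongr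
    linarith

lemma interp {E : Type*} [MeasurableSpace E] {μ : Measure E} (F : E → ℝ) (L τ : ℝ) (hL : 0 ≤ L)
    (hτ : 0 < τ) (h1 : ∀ x, ‖F x‖ ≤ τ * L) (h2 : ∫⁻ x, ‖F x‖ₑ ∂μ ≤ ENNReal.ofReal L)
    (p : ℝ≥0∞) (hp : 1 ≤ p) :
    eLpNorm F p μ ≤ ENNReal.ofReal (L * τ ^ (1 - 1 / p.toReal)) := by
  by_cases hpt : p = ∞
  · subst hpt
    rw [eLpNorm_exponent_top]
    refine (eLpNormEssSup_le_of_ae_bound (C := τ * L) (Eventually.of_forall h1)).trans ?_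
    simp [mul_comm]
  have hp0 : p ≠ 0 := by positivity
  have hq : 1 ≤ p.toReal := by
    rw [← ENNReal.toReal_one]; exact ENNReal.toReal_mono hpt hp
  set q := p.toReal with hqdef
  rw [eLpNorm_eq_lintegral_rpow_enorm_toReal hp0 hpt, ← hqdef]
  have hB : 0 ≤ τ * L := by positivity
  have key : ∫⁻ x, ‖F x‖ₑ ^ q ∂μ ≤ ENNReal.ofReal ((τ * L) ^ (q - 1) * L) := by
    calc ∫⁻ x, ‖F x‖ₑ ^ q ∂μ ≤ ∫⁻ x, ENNReal.ofReal ((τ * L) ^ (q - 1)) * ‖F x‖ₑ ∂μ := by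
          apply lintegral_mono
          intro x
          have : ‖F x‖ₑ ^ q = ‖F x‖ₑ ^ (q - 1) * ‖F x‖ₑ := by
            conv_lhs => rw [show q = (q - 1) + 1 by ring]
            rw [ENNReal.rpow_add_of_nonneg _ _ (by linarith) (by norm_num), ENNReal.rpow_one]
          simp only
          rw [this, ← ENNReal.ofReal_rpow_of_nonneg hB (by linarith)]
          gcongr
          rw [← ofReal_norm_eq_enorm]; exact ENNReal.ofReal_le_ofReal (h1 x)
      _ = ENNReal.ofReal ((τ * L) ^ (q - 1)) * ∫⁻ x, ‖F x‖ₑ ∂μ :=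
          lintegral_const_mul' _ _ ENNReal.ofReal_ne_top
      _ ≤ ENNReal.ofReal ((τ * L) ^ (q - 1)) * ENNReal.ofReal L := by gcongr
      _ = _ := by rw [← ENNReal.ofReal_mul (by positivity)]
  calc _ ≤ ENNReal.ofReal ((τ * L) ^ (q - 1) * L) ^ (1 / q) := by gcongr
    _ = ENNReal.ofReal (((τ * L) ^ (q - 1) * L) ^ (1 / q)) :=
        ENNReal.ofReal_rpow_of_nonneg (by positivity) (by positivity)
    _ = _ := by
        congr 1
        have hq0 : q ≠ 0 := by linarith
        rcases hL.eq_or_lt with h | h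
        · rw [← h]; simp [hq0]
        · rw [Real.mul_rpow hτ.le hL, mul_assoc, ← Real.rpow_add_one h.ne', sub_add_cancel,
            Real.mul_rpow (by positivity) (by positivity), ← Real.rpow_mul hτ.le,
            ← Real.rpow_mul hL, mul_one_div_cancel hq0, Real.rpow_one, mul_comm]
          congr 2; field_simp

lemma lim_zero {n : ℕ} (u₀ : EuclideanSpace ℝ (Fin n) → ℝ)
    (hu₀ : Integrable u₀)
    (hu₀w : Integrable (fun x : EuclideanSpace ℝ (Fin n) => (1 + ‖x‖) * |u₀ x|)) :
    Tendsto (fun t : ℝ => ∫ y, √t * (min (‖y‖ / √t) ((‖y‖ / √t) ^ 2) * |u₀ y|)) atTop (nhds 0) := by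
  have : (0:ℝ) = ∫ y : EuclideanSpace ℝ (Fin n), (0:ℝ) := by simp
  rw [this]
  apply tendsto_integral_filter_of_dominated_convergence _ _ _ hu₀w
  · refine Eventually.of_forall fun y => ?_
    have hs : Tendsto (fun t : ℝ => ‖y‖ ^ 2 * |u₀ y| * (√t)⁻¹) atTop (nhds 0) := by
      have := (tendsto_inv_atTop_zero.comp Real.tendsto_sqrt_atTop).const_mul (‖y‖ ^ 2 * |u₀ y|)
      simpa using this
    refine squeeze_zero' ?_ ?_ hs
    · exact Eventually.of_forall fun t => by positivity
    · filter_upwards [eventually_gt_atTop 0] with t ht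
      have := Real.sqrt_pos.mpr ht
      calc _ ≤ √t * ((‖y‖ / √t) ^ 2 * |u₀ y|) := by gcongr; exact min_le_right _ _
        _ = _ := by field_simp
  · refine Eventually.of_forall fun t => ?_
    refine AEStronglyMeasurable.const_mul (AEStronglyMeasurable.mul ?_ ?_) _
    · exact Continuous.aestronglyMeasurable (by fun_prop)
    · exact hu₀.abs.aestronglyMeasurable
  · filter_upwards [eventually_gt_atTop 0] with t ht
    refine Eventually.of_forall fun y => ?_
    have := Real.sqrt_pos.mpr ht
    rw [Real.norm_of_nonneg (by positivity)]
    calc _ ≤ √t * ((‖y‖ / √t) * |u₀ y|) := by gcongr; exact min_le_left _ _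
      _ = ‖y‖ * |u₀ y| := by field_simp
      _ ≤ _ := by gcongr; linarith

lemma heat_bound {n : ℕ} (x y : EuclideanSpace ℝ (Fin n)) (t : ℝ) (ht : 0 < t) :
    |heatG n (x - y) t - heatG n x t - heatG n x t * (inner ℝ x y / (2 * t))|
      ≤ (4 * Real.pi * t) ^ (-(n : ℝ) / 2) * ((3 * Real.exp 3) * min (‖y‖ / √t) ((‖y‖ / √t) ^ 2) *
        (Real.exp (-(1 / (8 * t)) * ‖x - y‖ ^ 2) + Real.exp (-(1 / (8 * t)) * ‖x‖ ^ 2))) := by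
  have hs : 0 < √t := Real.sqrt_pos.mpr ht
  have hss : √t ^ 2 = t := Real.sq_sqrt ht.le
  have h := kernel_bound ((√t)⁻¹ • x) ((√t)⁻¹ • y)
  have nrm : ∀ v : EuclideanSpace ℝ (Fin n), ‖(√t)⁻¹ • v‖ = ‖v‖ / √t := fun v => by
    rw [norm_smul, norm_inv, Real.norm_of_nonneg hs.le]; field_simp
  rw [← smul_sub, nrm, nrm, nrm, inner_smul_left, inner_smul_right] at h
  simp only [div_pow, hss, map_inv₀, RCLike.conj_to_real] at h
  have e1 : ∀ v : EuclideanSpace ℝ (Fin n), -(‖v‖ ^ 2 / t) / 4 = -‖v‖ ^ 2 / (4 * t) := fun v => by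
    field_simp
  have e2 : ∀ v : EuclideanSpace ℝ (Fin n), -(‖v‖ ^ 2 / t) / 8 = -(1 / (8 * t)) * ‖v‖ ^ 2 :=
    fun v => by field_simp
  have e3 : (√t)⁻¹ * ((√t)⁻¹ * inner ℝ x y) / 2 = inner ℝ x y / (2 * t) := by
    rw [← mul_assoc, ← mul_inv, ← sq, hss]; field_simp
  rw [e1, e1, e2, e2, e3] at h
  unfold heatG
  have hc : 0 ≤ (4 * Real.pi * t) ^ (-(n : ℝ) / 2) := by positivity
  rw [div_pow, hss]
  refine le_trans (le_of_eq ?_) (mul_le_mul_of_nonneg_left h hc)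
  rw [← abs_of_nonneg hc, ← abs_mul, abs_of_nonneg hc]
  congr 1; ring

lemma heat_fderiv {n : ℕ} (x v : EuclideanSpace ℝ (Fin n)) (t : ℝ) (ht : 0 < t) :
    fderiv ℝ (fun z => heatG n z t) x v = - heatG n x t * (inner ℝ x v / (2 * t)) := by
  have h1 : HasFDerivAt (fun z : EuclideanSpace ℝ (Fin n) => ‖z‖ ^ 2) (2 • innerSL ℝ x) x :=
    (hasStrictFDerivAt_norm_sq x).hasFDerivAt
  have h2 := (((h1.const_mul (-1 / (4 * t))).exp).const_mul ((4 * Real.pi * t) ^ (-(n : ℝ) / 2)))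
  have e : (fun z => heatG n z t) = fun z : EuclideanSpace ℝ (Fin n) =>
      (4 * Real.pi * t) ^ (-(n : ℝ) / 2) * Real.exp (-1 / (4 * t) * ‖z‖ ^ 2) := by
    funext z; unfold heatG; congr 2; ring
  have ex := congrFun e x
  rw [e, h2.fderiv, ex]
  simp
  field_simp
  ring

lemma heat_cont {n : ℕ} (t : ℝ) : Continuous (fun z => heatG n z t) := by
  unfold heatG; fun_prop

lemma heat_le {n : ℕ} (x : EuclideanSpace ℝ (Fin n)) (t : ℝ) (ht : 0 < t) :
    ‖heatG n x t‖ ≤ (4 * Real.pi * t) ^ (-(n : ℝ) / 2) := by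
  unfold heatG
  rw [Real.norm_of_nonneg (by positivity)]
  apply mul_le_of_le_one_right (by positivity)
  rw [Real.exp_le_one_iff]
  apply div_nonpos_of_nonpos_of_nonneg
  · nlinarith [sq_nonneg ‖x‖]
  · positivity

lemma F_eq {n : ℕ} (u₀ : EuclideanSpace ℝ (Fin n) → ℝ)
    (hu₀ : Integrable u₀)
    (hu₀w : Integrable (fun x : EuclideanSpace ℝ (Fin n) => (1 + ‖x‖) * |u₀ x|))
    (M : ℝ) (hM : M = ∫ x, u₀ x)
    (m : Fin n → ℝ) (hm : ∀ i, m i = ∫ x : EuclideanSpace ℝ (Fin n), x i * u₀ x)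
    (t : ℝ) (ht : 0 < t) (x : EuclideanSpace ℝ (Fin n)) :
    (∫ y, heatG n (x - y) t * u₀ y) - M * heatG n x t +
      ∑ i, m i * fderiv ℝ (fun z => heatG n z t) x (EuclideanSpace.single i 1)
    = ∫ y, (heatG n (x - y) t - heatG n x t - heatG n x t * (inner ℝ x y / (2 * t))) * u₀ y := by
  have hi : ∀ i, Integrable (fun y : EuclideanSpace ℝ (Fin n) => y i * u₀ y) := fun i => by
    refine hu₀w.mono ?_ (Eventually.of_forall fun y => ?_)
    · exact (Continuous.aestronglyMeasurable (by fun_prop)).mul hu₀.aestronglyMeasurable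
    · rw [norm_mul, norm_mul, Real.norm_of_nonneg (by positivity : 0 ≤ 1 + ‖y‖), norm_abs_eq_norm]
      gcongr
      linarith [PiLp.norm_apply_le y i]
  have h1 : Integrable (fun y => heatG n (x - y) t * u₀ y) :=
    hu₀.bdd_mul (((heat_cont t).comp (continuous_const.sub continuous_id)).aestronglyMeasurable)
      (Eventually.of_forall fun y => heat_le (x - y) t ht)
  have h2 : Integrable (fun y => heatG n x t * u₀ y) := hu₀.const_mul _
  have h3 : ∀ i, Integrable (fun y : EuclideanSpace ℝ (Fin n) =>
      (heatG n x t * (x i / (2 * t))) * (y i * u₀ y)) := fun i => (hi i).const_mul _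
  have e : ∀ y, (heatG n (x - y) t - heatG n x t - heatG n x t * (inner ℝ x y / (2 * t))) * u₀ y
      = heatG n (x - y) t * u₀ y - heatG n x t * u₀ y
        - ∑ i, (heatG n x t * (x i / (2 * t))) * (y i * u₀ y) := fun y => by
    rw [PiLp.inner_apply, sub_mul, sub_mul, Finset.sum_div, Finset.mul_sum, Finset.sum_mul]
    congr 1
    refine Finset.sum_congr rfl fun i _ => ?_
    simp
    ring
  simp_rw [e]
  have h12 : Integrable (fun y => heatG n (x - y) t * u₀ y - heatG n x t * u₀ y) := h1.sub h2
  rw [integral_sub h12 (integrable_finsetSum _ fun i _ => h3 i), integral_sub h1 h2,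
    integral_finsetSum _ fun i _ => h3 i, integral_const_mul, ← hM]
  simp_rw [integral_const_mul, ← hm, heat_fderiv _ _ t ht]
  rw [sub_eq_add_neg _ (∑ i, _), ← Finset.sum_neg_distrib, mul_comm M]
  congr 1
  refine Finset.sum_congr rfl fun i _ => ?_
  simp [EuclideanSpace.inner_single_right]
  ring

lemma gauss_lint {n : ℕ} (t : ℝ) (ht : 0 < t) :
    ∫⁻ x : EuclideanSpace ℝ (Fin n), ENNReal.ofReal (Real.exp (-(1 / (8 * t)) * ‖x‖ ^ 2))
      = ENNReal.ofReal ((8 * Real.pi * t) ^ ((n : ℝ) / 2)) := by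
  have h := GaussianFourier.integral_rexp_neg_mul_sq_norm (V := EuclideanSpace ℝ (Fin n))
    (b := 1 / (8 * t)) (by positivity)
  have hint : Integrable (fun x : EuclideanSpace ℝ (Fin n) =>
      Real.exp (-(1 / (8 * t)) * ‖x‖ ^ 2)) := by
    by_contra hc
    rw [integral_undef hc] at h
    have : 0 < (Real.pi / (1 / (8 * t))) ^ ((Module.finrank ℝ (EuclideanSpace ℝ (Fin n)) : ℝ) / 2) := by
      positivity
    linarith
  rw [← ofReal_integral_eq_lintegral_ofReal hint (Eventually.of_forall fun x => (Real.exp_pos _).le),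
    h, finrank_euclideanSpace_fin]
  congr 2
  field_simp

lemma P_int {n : ℕ} (u₀ : EuclideanSpace ℝ (Fin n) → ℝ)
    (hu₀ : Integrable u₀)
    (hu₀w : Integrable (fun x : EuclideanSpace ℝ (Fin n) => (1 + ‖x‖) * |u₀ x|))
    (t : ℝ) (ht : 0 < t) :
    Integrable (fun y => min (‖y‖ / √t) ((‖y‖ / √t) ^ 2) * |u₀ y|) := by
  have hs : 0 < √t := Real.sqrt_pos.mpr ht
  refine (hu₀w.const_mul (√t)⁻¹).mono ?_ (Eventually.of_forall fun y => ?_)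
  · exact (Continuous.aestronglyMeasurable (by fun_prop)).mul hu₀.abs.aestronglyMeasurable
  · rw [Real.norm_of_nonneg (by positivity), Real.norm_of_nonneg (by positivity)]
    calc _ ≤ (‖y‖ / √t) * |u₀ y| := by gcongr; exact min_le_left _ _
      _ = (√t)⁻¹ * (‖y‖ * |u₀ y|) := by ring
      _ ≤ _ := by gcongr; linarith

/-- Second-order asymptotic expansion of solutions of the heat equation:
if `u₀ ∈ L¹(ℝⁿ; (1+|x|)dx)`, then for every `p ∈ [1,∞]`,
`t^{(n/2)(1-1/p)+1/2} ‖G(t)∗u₀ - M G(t) + m·∇G(t)‖_{L^p} → 0` as `t → ∞`. -/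
theorem heat_semigroup_second_order_asymptotics (n : ℕ) (hn : 1 ≤ n)
    (u₀ : EuclideanSpace ℝ (Fin n) → ℝ)
    (hu₀ : Integrable u₀)
    (hu₀w : Integrable (fun x : EuclideanSpace ℝ (Fin n) => (1 + ‖x‖) * |u₀ x|))
    (p : ℝ≥0∞) (hp : 1 ≤ p)
    (M : ℝ) (hM : M = ∫ x, u₀ x)
    (m : Fin n → ℝ) (hm : ∀ i, m i = ∫ x : EuclideanSpace ℝ (Fin n), x i * u₀ x) :
    Tendsto (fun t : ℝ =>
        t ^ ((n : ℝ) / 2 * (1 - 1 / p.toReal) + 1 / 2) *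
          (eLpNorm (fun x : EuclideanSpace ℝ (Fin n) =>
              (∫ y, heatG n (x - y) t * u₀ y) - M * heatG n x t +
                ∑ i, m i * fderiv ℝ (fun z => heatG n z t) x (EuclideanSpace.single i 1))
            p volume).toReal)
      atTop (nhds 0) := by
  set C : ℝ := 3 * Real.exp 3 with hC
  have hC0 : 0 < C := by positivity
  set I : ℝ → ℝ := fun t => ∫ y, min (‖y‖ / √t) ((‖y‖ / √t) ^ 2) * |u₀ y| with hI
  have hI0 : ∀ t, 0 ≤ I t := fun t => integral_nonneg fun y => by positivity
  set D : ℝ := 2 * C * 2 ^ ((n : ℝ) / 2) with hD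
  have hD0 : 0 < D := by positivity
  have hlim : Tendsto (fun t => D * (√t * I t)) atTop (nhds 0) := by
    have := (lim_zero u₀ hu₀ hu₀w).const_mul D
    simp_rw [integral_const_mul] at this
    simpa using this
  refine squeeze_zero' ?_ ?_ hlim
  · filter_upwards [eventually_gt_atTop 0] with t ht
    positivity
  filter_upwards [eventually_gt_atTop 0] with t ht
  have hFe := F_eq u₀ hu₀ hu₀w M hM m hm t ht
  set F : EuclideanSpace ℝ (Fin n) → ℝ := fun x => (∫ y, heatG n (x - y) t * u₀ y) - M * heatG n x t +
      ∑ i, m i * fderiv ℝ (fun z => heatG n z t) x (EuclideanSpace.single i 1) with hF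
  set P : EuclideanSpace ℝ (Fin n) → ℝ := fun y => min (‖y‖ / √t) ((‖y‖ / √t) ^ 2) * |u₀ y| with hP
  have hPi : Integrable P := P_int u₀ hu₀ hu₀w t ht
  have hP0 : ∀ y, 0 ≤ P y := fun y => by positivity
  have hPI : ∫ y, P y = I t := rfl
  set c : ℝ := (4 * Real.pi * t) ^ (-(n : ℝ) / 2) with hc
  have hc0 : 0 < c := by positivity
  set k : EuclideanSpace ℝ (Fin n) → ℝ := fun x => Real.exp (-(1 / (8 * t)) * ‖x‖ ^ 2) with hk
  have hk0 : ∀ x, 0 ≤ k x := fun x => (Real.exp_pos _).le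
  have hk1 : ∀ x, k x ≤ 1 := fun x => by
    rw [hk]; simp only; rw [Real.exp_le_one_iff]
    have : 0 ≤ 1 / (8 * t) * ‖x‖ ^ 2 := by positivity
    linarith
  have hkc : Continuous k := by rw [hk]; fun_prop
  have hb : ∀ x y, ‖(heatG n (x - y) t - heatG n x t - heatG n x t * (inner ℝ x y / (2 * t))) * u₀ y‖
      ≤ (c * C * P y) * (k (x - y) + k x) := fun x y => by
    rw [norm_mul, Real.norm_eq_abs, Real.norm_eq_abs]
    refine (mul_le_mul_of_nonneg_right (heat_bound x y t ht) (abs_nonneg _)).trans (le_of_eq ?_)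
    simp only [hP, hk, hc, hC]; ring
  have hn2 : (1:ℝ) ≤ 2 ^ ((n : ℝ) / 2) := Real.one_le_rpow (by norm_num) (by positivity)
  have hct : c ≤ t ^ (-(n : ℝ) / 2) := by
    apply Real.rpow_le_rpow_of_nonpos ht
    · nlinarith [Real.pi_gt_three]
    · have : (0:ℝ) ≤ n := by positivity
      linarith
  have hsup : ∀ x, ‖F x‖ ≤ t ^ (-(n : ℝ) / 2) * (D * I t) := fun x => by
    rw [show F x = _ from hFe x]
    calc _ ≤ ∫ y, (c * C * 2) * P y := by
          refine norm_integral_le_of_norm_le (hPi.const_mul _) (Eventually.of_forall fun y => ?_)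
          refine (hb x y).trans ?_
          have : (c * C * P y) * (k (x - y) + k x) ≤ (c * C * P y) * (1 + 1) := by
            have := hP0 y
            gcongr <;> exact hk1 _
          linarith
      _ = c * (C * 2 * 1 * I t) := by rw [integral_const_mul, hPI]; ring
      _ ≤ t ^ (-(n : ℝ) / 2) * (C * 2 * 2 ^ ((n : ℝ) / 2) * I t) := by
          have := hI0 t
          gcongr
      _ = _ := by rw [hD]; ring
  have hcK : c * (8 * Real.pi * t) ^ ((n : ℝ) / 2) = 2 ^ ((n : ℝ) / 2) := by
    have hX : 0 < 4 * Real.pi * t := by positivity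
    rw [hc, show 8 * Real.pi * t = 2 * (4 * Real.pi * t) by ring,
      Real.mul_rpow (by norm_num) hX.le, mul_left_comm, ← Real.rpow_add hX, neg_div,
      neg_add_cancel, Real.rpow_zero, mul_one]
  have hL1 : ∫⁻ x, ‖F x‖ₑ ≤ ENNReal.ofReal (D * I t) := by
    calc ∫⁻ x, ‖F x‖ₑ
        ≤ ∫⁻ x, ∫⁻ y, ENNReal.ofReal (c * C * P y) * ENNReal.ofReal (k (x - y) + k x) := by
          refine lintegral_mono fun x => ?_
          rw [show F x = _ from hFe x]
          refine (enorm_integral_le_lintegral_enorm _).trans (lintegral_mono fun y => ?_)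
          have := hP0 y
          rw [← ENNReal.ofReal_mul (by positivity), ← ofReal_norm]
          exact ENNReal.ofReal_le_ofReal (hb x y)
      _ = ∫⁻ y, ∫⁻ x, ENNReal.ofReal (c * C * P y) * ENNReal.ofReal (k (x - y) + k x) := by
          apply lintegral_lintegral_swap
          refine AEMeasurable.mul
            (f := fun z : EuclideanSpace ℝ (Fin n) × EuclideanSpace ℝ (Fin n) =>
              ENNReal.ofReal (c * C * P z.2))
            (g := fun z => ENNReal.ofReal (k (z.1 - z.2) + k z.1)) ?_ ?_
          · exact ((hPi.aestronglyMeasurable.aemeasurable.const_mul (c * C)).comp_snd).ennreal_ofReal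
          · refine (Continuous.aemeasurable ?_).ennreal_ofReal
            fun_prop
      _ = ∫⁻ y, ENNReal.ofReal (D * P y) := by
          refine lintegral_congr fun y => ?_
          rw [lintegral_const_mul' _ _ ENNReal.ofReal_ne_top]
          simp_rw [ENNReal.ofReal_add (hk0 _) (hk0 _)]
          have hy := hP0 y
          rw [lintegral_add_right _ hkc.measurable.ennreal_ofReal,
            lintegral_sub_right_eq_self (fun x => ENNReal.ofReal (k x)) y, gauss_lint t ht,
            ← ENNReal.ofReal_add (by positivity) (by positivity),
            ← ENNReal.ofReal_mul (by positivity), hD, ← hcK]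
          congr 1; ring
      _ = ENNReal.ofReal (D * I t) := by
          rw [← ofReal_integral_eq_lintegral_ofReal (hPi.const_mul D)
            (Eventually.of_forall fun y => mul_nonneg hD0.le (hP0 y)), integral_const_mul, hPI]
  have hfin := interp F (D * I t) (t ^ (-(n : ℝ) / 2)) (mul_nonneg hD0.le (hI0 t)) (by positivity)
    hsup hL1 p hp
  have hDI : 0 ≤ D * I t := mul_nonneg hD0.le (hI0 t)
  have hfin' := ENNReal.toReal_le_of_le_ofReal (by positivity) hfin
  calc _ ≤ t ^ ((n : ℝ) / 2 * (1 - 1 / p.toReal) + 1 / 2) *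
        (D * I t * (t ^ (-(n : ℝ) / 2)) ^ (1 - 1 / p.toReal)) := by gcongr
    _ = D * I t * (t ^ ((n : ℝ) / 2 * (1 - 1 / p.toReal) + 1 / 2) *
        t ^ (-(n : ℝ) / 2 * (1 - 1 / p.toReal))) := by rw [← Real.rpow_mul ht.le]; ring
    _ = D * I t * √t := by
        rw [← Real.rpow_add ht, Real.sqrt_eq_rpow]; congr 2; ring
    _ = _ := by ring
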